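/- Let p be a prime, n ≥ 2 and 1 ≤ t < n integers, and suppose the equation a^{p^t+1} = −1 has a solution a ∈ F_{p^n} (for p = 2 this always holds, with a = 1). Then the set {x ∈ F_{p^n} : x^{p^n−2} + x^{p^t} = 0} has exactly 1 + gcd(p^t + 1, p^n − 1) elements. -/

import Mathlib

open Finset

/-!
On a finite field with `q > 2` elements, `x ^ (q - 2)` is `x⁻¹`. Multiplying `x⁻¹ + x ^ m = 0` by
`x` shows that its nonzero solutions are those of `x ^ (m + 1) = -1`. They form a fibre of the
`(m + 1)`-th power map on the cyclic group of units, of order `q - 1`; a nonempty fibre is a coset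
of the kernel, which has `gcd (m + 1, q - 1)` elements.
-/

theorem natCard_pow_eq_pow {G : Type*} [CommGroup G] [IsCyclic G] [Finite G] (g : G) (k : ℕ) :
    Nat.card {x : G // x ^ k = g ^ k} = (Nat.card G).gcd k := by
  let powHom : G →* G := powMonoidHom k
  calc Nat.card {x : G // x ^ k = g ^ k} = Nat.card powHom.ker :=
        Nat.card_congr (powHom.fiberEquivKer g)
    _ = (Nat.card G).gcd k := IsCyclic.card_powMonoidHom_ker G k

theorem inv_add_pow_eq_zero_iff {K : Type*} [DivisionRing K] {m : ℕ} (hm : m ≠ 0) (x : K) :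
    x⁻¹ + x ^ m = 0 ↔ x = 0 ∨ x ^ (m + 1) = -1 := by
  rcases eq_or_ne x 0 with rfl | hx
  · simp [hm]
  · calc x⁻¹ + x ^ m = 0 ↔ (x⁻¹ + x ^ m) * x = 0 := by simp [hx]
      _ ↔ x ^ (m + 1) = -1 := by
        rw [add_mul, inv_mul_cancel₀ hx, ← pow_succ, add_comm, eq_neg_iff_add_eq_zero]
      _ ↔ x = 0 ∨ x ^ (m + 1) = -1 := by simp [hx]

theorem pow_card_sub_two_eq_inv {M : Type*} [GroupWithZero M] [Fintype M]
    (hM : 2 < Fintype.card M) (x : M) :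
    x ^ (Fintype.card M - 2) = x⁻¹ := by
  rcases eq_or_ne x 0 with rfl | hx
  · rw [zero_pow (by lia), inv_zero]
  · apply eq_inv_of_mul_eq_one_left
    rw [← pow_succ, show Fintype.card M - 2 + 1 = Fintype.card M - 1 by lia,
      FiniteField.pow_card_sub_one_eq_one x hx]

theorem card_filter_pow_eq_pow {M : Type*} [CommGroupWithZero M] [IsCyclic Mˣ] [Fintype M]
    [DecidableEq M] {a : M} (ha : a ≠ 0) {k : ℕ} (hk : k ≠ 0) :
    #{x : M | x ^ k = a ^ k} = k.gcd (Fintype.card M - 1) := by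
  have ne_zero {x : M} (hx : x ^ k = a ^ k) : x ≠ 0 :=
    ne_zero_pow hk (hx ▸ pow_ne_zero k ha)
  let unitsEquiv : {u : Mˣ // u ^ k = Units.mk0 a ha ^ k} ≃ {x : M // x ^ k = a ^ k} :=
    { toFun u := ⟨u.1, congrArg Units.val u.2⟩
      invFun x := ⟨Units.mk0 x.1 (ne_zero x.2), Units.ext x.2⟩
      left_inv _ := Subtype.ext (Units.ext rfl)
      right_inv _ := rfl }
  calc #{x : M | x ^ k = a ^ k} = Nat.card {x : M // x ^ k = a ^ k} := by
        rw [Nat.card_eq_fintype_card, Fintype.card_subtype]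
    _ = Nat.card {u : Mˣ // u ^ k = Units.mk0 a ha ^ k} := (Nat.card_congr unitsEquiv).symm
    _ = k.gcd (Fintype.card M - 1) := by
        rw [natCard_pow_eq_pow, Nat.card_units, Nat.card_eq_fintype_card, Nat.gcd_comm]

theorem card_roots_inverse_plus_monomial_general
    {F : Type*} [Field F] [Fintype F] [DecidableEq F]
    {m : ℕ} (hm : m ≠ 0) (hF : 2 < Fintype.card F)
    (hroot : ∃ a : F, a ^ (m + 1) = -1) :
    #{x : F | x ^ (Fintype.card F - 2) + x ^ m = 0} =
      1 + (m + 1).gcd (Fintype.card F - 1) := by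
  obtain ⟨a, ha⟩ := hroot
  have ha₀ : a ≠ 0 := ne_zero_pow m.succ_ne_zero (ha ▸ neg_ne_zero.mpr one_ne_zero)
  have roots_eq : ({x : F | x ^ (Fintype.card F - 2) + x ^ m = 0} : Finset F) =
      insert 0 ({x : F | x ^ (m + 1) = a ^ (m + 1)} : Finset F) := by
    ext x
    simp [pow_card_sub_two_eq_inv hF, inv_add_pow_eq_zero_iff hm, ha]
  have zero_notMem : (0 : F) ∉ ({x : F | x ^ (m + 1) = a ^ (m + 1)} : Finset F) := by
    simp [ha]
  rw [roots_eq, card_insert_of_notMem zero_notMem, card_filter_pow_eq_pow ha₀ m.succ_ne_zero,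
    add_comm]

theorem card_roots_inverse_plus_monomial
    {F : Type*} [Field F] [Fintype F] [DecidableEq F]
    (p n t : ℕ) (hp : p.Prime) (hn : 2 ≤ n) (ht1 : 1 ≤ t) (htn : t < n)
    (hF : Fintype.card F = p ^ n)
    (hroot : ∃ a : F, a ^ (p ^ t + 1) = -1) :
    (Finset.univ.filter fun x : F => x ^ (p ^ n - 2) + x ^ p ^ t = 0).card =
      1 + Nat.gcd (p ^ t + 1) (p ^ n - 1) := by
  have two_lt : 2 < p ^ n := hp.two_le.trans_lt (lt_self_pow₀ hp.one_lt hn)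
  exact hF ▸ card_roots_inverse_plus_monomial_general (pow_ne_zero t hp.ne_zero) (hF ▸ two_lt) hroot
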